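/- In a simple polygon, every Euclidean shortest path between two points is also an L1 shortest path between them (with respect to paths constrained to the polygon). -/

import Mathlib

open scoped Classical

/-- Points in the plane. -/
abbrev Pt : Type := ℝ × ℝ

/-- The L1 distance between two points of the plane. -/
noncomputable def d1 (p q : Pt) : ℝ := |p.1 - q.1| + |p.2 - q.2|

/-- The L1 length of a polygonal path given by its list of vertices. -/
noncomputable def len : List Pt → ℝ
  | [] => 0
  | [_] => 0
  | p :: q :: r => d1 p q + len (q :: r)

/-- A polygonal path is monotone in the coordinate `f` if that coordinate is
(weakly) monotone along the path, in one of the two directions. -/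
def MonoCoord (f : Pt → ℝ) (L : List Pt) : Prop :=
  L.Chain' (fun a b => f a ≤ f b) ∨ L.Chain' (fun a b => f b ≤ f a)

/-- A polygonal path is xy-monotone if it is both x-monotone and y-monotone. -/
def XYMono (L : List Pt) : Prop := MonoCoord Prod.fst L ∧ MonoCoord Prod.snd L

/-- A polygonal path lies in a set `B` if all its vertices and all its
segments lie in `B`. -/
def PathIn (B : Set Pt) (L : List Pt) : Prop :=
  (∀ p ∈ L, p ∈ B) ∧ L.Chain' (fun a b => segment ℝ a b ⊆ B)

/-- Euclidean distance in the plane. -/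
noncomputable def d2 (p q : Pt) : ℝ := Real.sqrt ((p.1 - q.1) ^ 2 + (p.2 - q.2) ^ 2)

/-- Euclidean length of a polygonal path. -/
noncomputable def elen : List Pt → ℝ
  | [] => 0
  | [_] => 0
  | p :: q :: r => d2 p q + elen (q :: r)

/-- `L` is a Euclidean shortest path from `s` to `t` among polygonal paths in `B`. -/
def IsEucShortestIn (B : Set Pt) (s t : Pt) (L : List Pt) : Prop :=
  PathIn B L ∧ L.head? = some s ∧ L.getLast? = some t ∧
    ∀ M : List Pt, PathIn B M → M.head? = some s → M.getLast? = some t →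
      elen L ≤ elen M

/-- `L` is an L1 shortest path from `s` to `t` among polygonal paths in `B`. -/
def IsL1ShortestIn (B : Set Pt) (s t : Pt) (L : List Pt) : Prop :=
  PathIn B L ∧ L.head? = some s ∧ L.getLast? = some t ∧
    ∀ M : List Pt, PathIn B M → M.head? = some s → M.getLast? = some t →
      len L ≤ len M

/-- `B` is a simple polygon: a compact region, equal to the closure of its
interior, whose frontier is a simple closed polygonal curve on vertices
`v 0, …, v (n-1)`. -/
def IsSimplePolygon (B : Set Pt) : Prop :=
  ∃ (n : ℕ) (v : ZMod n → Pt), 3 ≤ n ∧ Function.Injective v ∧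
    IsCompact B ∧ B = closure (interior B) ∧
    frontier B = ⋃ i : ZMod n, segment ℝ (v i) (v (i + 1)) ∧
    (∀ i j : ZMod n, i ≠ j → j ≠ i + 1 → i ≠ j + 1 →
      segment ℝ (v i) (v (i + 1)) ∩ segment ℝ (v j) (v (j + 1)) = ∅) ∧
    (∀ i : ZMod n, segment ℝ (v i) (v (i + 1)) ∩ segment ℝ (v (i + 1)) (v (i + 1 + 1))
      = {v (i + 1)})

/-!
The `L¹` length of a path is the sum of the total variations of its two coordinates, and the total
variation of the abscissa is the integral over `c` of the number of crossings with the vertical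
line of abscissa `c`. By symmetry it therefore suffices that a Euclidean shortest path `L` crosses
almost every vertical line at most as often as any competitor `M`.

The complement of a simple polygon `B` is connected, because the frontier of `B` is a connected
curve that locally has only two sides. As `B` is bounded, the loop formed by `L` and `M` thus has
winding number zero around all points outside `B`. A point moving along the vertical line
therefore cannot pass from one gap of `B` to the next across a single edge of the loop, so each
crossing of `L` sees, vertically and within `B`, another crossing of `L` or one of `M`. The former
is impossible, since the vertical shortcut would make `L` strictly shorter. As seeing each other is
an equivalence relation, crossings of `L` are thus matched injectively with crossings of `M`.
-/

open Topology

section TwoSided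

variable {X : Type*} [TopologicalSpace X]

theorem isClosed_of_disjoint_frontier_union {U V : Set X} (hU : IsOpen U) (hV : IsOpen V)
    (hUV : Disjoint U V) (h : Disjoint (frontier (U ∪ V)) (closure V)) : IsClosed V := by
  refine isClosed_of_closure_subset fun x hx => ?_
  have hxUV : x ∈ U ∪ V := by
    by_contra hxUV
    refine h.notMem_of_mem_right hx ⟨closure_mono Set.subset_union_right hx, ?_⟩
    rwa [(hU.union hV).interior_eq]
  exact hxUV.resolve_left fun hxU => (hUV.closure_right hU).notMem_of_mem_left hxU hx

theorem eq_univ_of_disjoint_frontier_union [PreconnectedSpace X] {U V : Set X} (hU : IsOpen U)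
    (hV : IsOpen V) (hUV : Disjoint U V) (hne : V.Nonempty)
    (h : Disjoint (frontier (U ∪ V)) (closure V)) : V = Set.univ :=
  IsClopen.eq_univ ⟨isClosed_of_disjoint_frontier_union hU hV hUV h, hV⟩ hne

theorem isPreconnected_of_isPreconnected_frontier [PreconnectedSpace X] {C : Set X}
    (hC : IsOpen C) (hF : IsPreconnected (frontier C))
    (hloc : ∀ p ∈ frontier C, ∃ N ∈ 𝓝 p, IsPreconnected (N ∩ C)) : IsPreconnected C := by
  intro u v hu hv hCuv hCu hCv
  by_contra hdisj
  have huv : Disjoint (C ∩ u) (C ∩ v) := Set.disjoint_left.2 fun x hxu hxv =>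
    hdisj ⟨x, hxu.1, hxu.2, hxv.2⟩
  have hunion : C ∩ u ∪ C ∩ v = C := by
    rw [← Set.inter_union_distrib_left, Set.inter_eq_left.2 hCuv]
  have not_both : ∀ p ∈ frontier C, p ∈ closure (C ∩ u) → p ∉ closure (C ∩ v) := by
    intro p hp hpu hpv
    obtain ⟨N, hN, hNC⟩ := hloc p hp
    obtain ⟨x, hxN, hxC, hxu⟩ := mem_closure_iff_nhds.1 hpu N hN
    obtain ⟨y, hyN, hyC, hyv⟩ := mem_closure_iff_nhds.1 hpv N hN
    obtain ⟨z, hz, hzuv⟩ := hNC u v hu hv (Set.inter_subset_right.trans hCuv)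
      ⟨x, ⟨hxN, hxC⟩, hxu⟩ ⟨y, ⟨hyN, hyC⟩, hyv⟩
    exact hdisj ⟨z, hz.2, hzuv⟩
  have hcover : frontier C ⊆ closure (C ∩ u) ∪ closure (C ∩ v) := by
    rw [← closure_union, hunion]
    exact frontier_subset_closure
  have one_side : Disjoint (frontier C) (closure (C ∩ u)) ∨
      Disjoint (frontier C) (closure (C ∩ v)) := by
    by_contra! hmeet
    obtain ⟨p, hp, hpu, hpv⟩ := isPreconnected_closed_iff.1 hF _ _ isClosed_closure
      isClosed_closure hcover (Set.not_disjoint_iff_nonempty_inter.1 hmeet.1)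
      (Set.not_disjoint_iff_nonempty_inter.1 hmeet.2)
    exact not_both p hp hpu hpv
  have hou := hC.inter hu
  have hov := hC.inter hv
  rcases one_side with h | h
  · rw [eq_univ_of_disjoint_frontier_union hov hou huv.symm hCu
      (by rwa [Set.union_comm, hunion])] at huv
    exact hCv.ne_empty (Set.univ_disjoint.1 huv)
  · rw [eq_univ_of_disjoint_frontier_union hou hov huv hCv (by rwa [hunion])] at huv
    exact hCu.ne_empty (Set.disjoint_univ.1 huv)

/-- The set `F` has at most two sides at `p`: arbitrarily small open neighbourhoods of `p` are cut
by `F` into two (possibly empty) preconnected pieces. -/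
def IsTwoSidedAt (F : Set X) (p : X) : Prop :=
  ∀ U ∈ 𝓝 p, ∃ N ⊆ U, IsOpen N ∧ p ∈ N ∧
    ∃ S T, IsPreconnected S ∧ IsPreconnected T ∧ N \ F = S ∪ T

theorem IsTwoSidedAt.iUnion {ι : Type*} [Finite ι] {E : ι → Set X} {p : X} {s : Set ι}
    (h : IsTwoSidedAt (⋃ i ∈ s, E i) p) (hE : ∀ i ∉ s, IsClosed (E i)) (hp : ∀ i ∉ s, p ∉ E i) :
    IsTwoSidedAt (⋃ i, E i) p := by
  intro U hU
  have hfar : (⋃ i ∈ sᶜ, E i)ᶜ ∈ 𝓝 p :=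
    ((Set.toFinite sᶜ).isClosed_biUnion hE).isOpen_compl.mem_nhds (by simpa using hp)
  obtain ⟨N, hNU, hNo, hpN, S, T, hS, hT, hN⟩ := h _ (Filter.inter_mem hU hfar)
  refine ⟨N, hNU.trans Set.inter_subset_left, hNo, hpN, S, T, hS, hT, ?_⟩
  rw [← hN]
  ext q
  refine and_congr_right fun hqN => not_congr ?_
  have hq : ∀ i ∉ s, q ∉ E i := by simpa using (hNU hqN).2
  simp only [Set.mem_iUnion, exists_prop]
  exact exists_congr fun i => ⟨fun hqi => ⟨by_contra fun hi => hq i hi hqi, hqi⟩, And.right⟩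

theorem subset_or_subset_compl_of_disjoint_frontier {S B : Set X} (hS : IsPreconnected S)
    (h : Disjoint S (frontier B)) : S ⊆ B ∨ S ⊆ Bᶜ := by
  have hcover : S ⊆ interior B ∪ (closure B)ᶜ := fun x hx =>
    or_iff_not_imp_left.2 fun hi hc => h.notMem_of_mem_left hx ⟨hc, hi⟩
  have hdisj : Disjoint (interior B) (closure B)ᶜ :=
    Set.disjoint_compl_right_iff_subset.2 interior_subset_closure
  exact (hS.subset_or_subset isOpen_interior isClosed_closure.isOpen_compl hdisj hcover).imp
    (·.trans interior_subset) (·.trans (Set.compl_subset_compl.2 subset_closure))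

theorem IsTwoSidedAt.exists_nhds_isPreconnected_inter_compl {B : Set X} {p : X} (hB : IsClosed B)
    (hp : p ∈ closure (interior B)) (h : IsTwoSidedAt (frontier B) p) :
    ∃ N ∈ 𝓝 p, IsPreconnected (N ∩ Bᶜ) := by
  obtain ⟨N, -, hNo, hpN, S, T, hS, hT, hN⟩ := h Set.univ Filter.univ_mem
  refine ⟨N, hNo.mem_nhds hpN, ?_⟩
  obtain ⟨q, hqN, hqB⟩ := mem_closure_iff.1 hp N hNo hpN
  wlog hqS : q ∈ S generalizing S T
  · exact this T S hT hS (hN.trans (Set.union_comm _ _))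
      ((hN.subset ⟨hqN, fun hq => hq.2 hqB⟩).resolve_left hqS)
  have side : ∀ {R}, IsPreconnected R → R ⊆ S ∪ T → R ⊆ B ∨ R ⊆ Bᶜ := fun hR hRN =>
    subset_or_subset_compl_of_disjoint_frontier hR <|
      Set.disjoint_left.2 fun x hx => (hN.superset (hRN hx)).2
  have hSB : S ⊆ B := (side hS Set.subset_union_left).resolve_right
    fun hSc => hSc hqS (interior_subset hqB)
  have hNT : N ∩ Bᶜ = T ∩ Bᶜ := by
    ext x
    refine and_congr_left fun hxB => ⟨fun hxN => ?_, fun hxT => (hN.superset (Or.inr hxT)).1⟩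
    exact (hN.subset ⟨hxN, fun hx => hxB (hB.frontier_subset hx)⟩).resolve_left
      fun hxS => hxB (hSB hxS)
  rw [hNT]
  rcases side hT Set.subset_union_right with hTB | hTc
  · rw [Set.disjoint_iff_inter_eq_empty.1 (Set.disjoint_compl_right_iff_subset.2 hTB)]
    exact isPreconnected_empty
  · rwa [Set.inter_eq_left.2 hTc]

end TwoSided

section PlaneSegments

variable {E : Type*} [NormedAddCommGroup E] [NormedSpace ℝ E]

theorem isClosed_segment (a b : E) : IsClosed (segment ℝ a b) := by
  rw [segment_eq_image_lineMap]
  exact (isCompact_Icc.image AffineMap.lineMap_continuous).isClosed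

theorem segment_union_segment {a b p : E} (hp : p ∈ segment ℝ a b) :
    segment ℝ a p ∪ segment ℝ p b = segment ℝ a b := by
  rw [segment_eq_image_lineMap] at hp
  obtain ⟨t, ht, rfl⟩ := hp
  set ℓ : ℝ →ᵃ[ℝ] E := AffineMap.lineMap a b
  have hsub : ∀ x y : ℝ, segment ℝ (ℓ x) (ℓ y) = ℓ '' segment ℝ x y := fun x y =>
    (image_segment ℝ ℓ x y).symm
  have h0 : ℓ 0 = a := AffineMap.lineMap_apply_zero a b
  have h1 : ℓ 1 = b := AffineMap.lineMap_apply_one a b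
  calc segment ℝ a (ℓ t) ∪ segment ℝ (ℓ t) b
      = segment ℝ (ℓ 0) (ℓ t) ∪ segment ℝ (ℓ t) (ℓ 1) := by rw [h0, h1]
    _ = ℓ '' (Set.Icc 0 t ∪ Set.Icc t 1) := by
        rw [hsub, hsub, segment_eq_Icc ht.1, segment_eq_Icc ht.2, Set.image_union]
    _ = segment ℝ a b := by
        rw [Set.Icc_union_Icc_eq_Icc ht.1 ht.2, ← segment_eq_Icc zero_le_one, ← hsub, h0, h1]

theorem exists_dual_pair (hE : Module.finrank ℝ E = 2) {u w : E}
    (h : LinearIndependent ℝ ![u, w]) :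
    ∃ f g : E →L[ℝ] ℝ, (∀ z, f z • u + g z • w = z) ∧ f u = 1 ∧ f w = 0 ∧ g u = 0 ∧ g w = 1 := by
  have : FiniteDimensional ℝ E := FiniteDimensional.of_finrank_eq_succ hE
  let e := basisOfLinearIndependentOfCardEqFinrank h (by simp [hE])
  have he : ⇑e = ![u, w] := coe_basisOfLinearIndependentOfCardEqFinrank h _
  have he0 : e 0 = u := by simp [he]
  have he1 : e 1 = w := by simp [he]
  refine ⟨LinearMap.toContinuousLinearMap (e.coord 0), LinearMap.toContinuousLinearMap (e.coord 1),
    fun z => ?_, ?_⟩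
  · rw [LinearMap.coe_toContinuousLinearMap', LinearMap.coe_toContinuousLinearMap',
      Module.Basis.coord_apply, Module.Basis.coord_apply]
    simpa only [Fin.sum_univ_two, he0, he1] using e.sum_repr z
  · simp [← he0, ← he1]

theorem mem_segment_iff_of_dual_pair {u w : E} {f g : E →L[ℝ] ℝ}
    (h : ∀ z, f z • u + g z • w = z) (hf : f u = 1) (hg : g u = 0) {p x : E} :
    x ∈ segment ℝ p (p + u) ↔ f x ∈ Set.Icc (f p) (f p + 1) ∧ g x = g p := by
  rw [segment_eq_image', Set.mem_image]
  constructor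
  · rintro ⟨t, ht, rfl⟩
    simpa [hf, hg] using ht
  · rintro ⟨⟨h0, h1⟩, hgx⟩
    refine ⟨f x - f p, ⟨by linarith, by linarith⟩, ?_⟩
    have hx := h (x - p)
    rw [map_sub, map_sub, hgx, sub_self, zero_smul, add_zero] at hx
    rw [add_sub_cancel_left, hx, add_sub_cancel]

theorem isTwoSidedAt_segment (hE : Module.finrank ℝ E = 2) {a b p : E} (hab : a ≠ b)
    (hp : p ∈ openSegment ℝ a b) : IsTwoSidedAt (segment ℝ a b) p := by
  obtain ⟨w, hw⟩ := exists_linearIndependent_pair_of_one_lt_finrank (R := ℝ)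
    (by rw [hE]; exact one_lt_two) (sub_ne_zero.2 hab.symm)
  obtain ⟨f, g, hfg, hf, -, hg, -⟩ := exists_dual_pair hE hw
  have hseg : ∀ x, x ∈ segment ℝ a b ↔ f x ∈ Set.Icc (f a) (f a + 1) ∧ g x = g a := fun x => by
    rw [← mem_segment_iff_of_dual_pair hfg hf hg, add_sub_cancel]
  intro U hU
  obtain ⟨ε, hε, hεU⟩ := Metric.mem_nhds_iff.1 hU
  set N : Set E := Metric.ball p ε ∩ f ⁻¹' Set.Ioo (f a) (f a + 1)
  have hN : Convex ℝ N := (convex_ball p ε).inter ((convex_Ioo _ _).linear_preimage f.toLinearMap)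
  refine ⟨N, Set.inter_subset_left.trans hεU,
    Metric.isOpen_ball.inter (isOpen_Ioo.preimage f.continuous), ⟨Metric.mem_ball_self hε, ?_⟩,
    N ∩ g ⁻¹' Set.Iio (g a), N ∩ g ⁻¹' Set.Ioi (g a),
    (hN.inter ((convex_Iio _).linear_preimage g.toLinearMap)).isPreconnected,
    (hN.inter ((convex_Ioi _).linear_preimage g.toLinearMap)).isPreconnected, ?_⟩
  · rw [openSegment_eq_image'] at hp
    obtain ⟨t, ht, rfl⟩ := hp
    simpa [-map_sub, hf] using ht
  · rw [← Set.inter_union_distrib_left, ← Set.preimage_union, Set.Iio_union_Ioi]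
    ext x
    refine and_congr_right fun hx => ?_
    rw [hseg, not_and]
    exact ⟨fun h => h (Set.Ioo_subset_Icc_self hx.2), fun h _ => h⟩

theorem exists_mem_lt_and_lt {f g : E →L[ℝ] ℝ} {p v : E} {N : Set E} (hN : N ∈ 𝓝 p)
    (hf : 0 < f v) (hg : 0 < g v) : ∃ q ∈ N, f q < f p ∧ g q < g p := by
  have hlim : Filter.Tendsto (fun t : ℝ => p - t • v) (𝓝[>] 0) (𝓝 p) :=
    tendsto_nhdsWithin_of_tendsto_nhds <| (by fun_prop : Continuous _).tendsto' _ _ (by simp)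
  obtain ⟨t, htN, ht⟩ := ((hlim.eventually hN).and self_mem_nhdsWithin).exists
  refine ⟨_, htN, ?_, ?_⟩
  · simpa using mul_pos ht hf
  · simpa using mul_pos ht hg

theorem isTwoSidedAt_corner (hE : Module.finrank ℝ E = 2) {a b p : E}
    (h : LinearIndependent ℝ ![a - p, b - p]) :
    IsTwoSidedAt (segment ℝ p a ∪ segment ℝ p b) p := by
  obtain ⟨f, g, hfg, hfa, hfb, hga, hgb⟩ := exists_dual_pair hE h
  have hsega : ∀ x, x ∈ segment ℝ p a ↔ f x ∈ Set.Icc (f p) (f p + 1) ∧ g x = g p := fun x => by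
    rw [← mem_segment_iff_of_dual_pair hfg hfa hga, add_sub_cancel]
  have hsegb : ∀ x, x ∈ segment ℝ p b ↔ g x ∈ Set.Icc (g p) (g p + 1) ∧ f x = f p := fun x => by
    rw [← mem_segment_iff_of_dual_pair (fun z => (add_comm _ _).trans (hfg z)) hgb hfb,
      add_sub_cancel]
  intro U hU
  obtain ⟨ε, hε, hεU⟩ := Metric.mem_nhds_iff.1 hU
  have convex_half : ∀ (φ : E →L[ℝ] ℝ) {I : Set ℝ}, Convex ℝ I → Convex ℝ (φ ⁻¹' I) :=
    fun φ _ hI => hI.linear_preimage φ.toLinearMap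
  set N : Set E := Metric.ball p ε ∩ (f ⁻¹' Set.Iio (f p + 1) ∩ g ⁻¹' Set.Iio (g p + 1))
  have hN : Convex ℝ N := (convex_ball p ε).inter
    ((convex_half f (convex_Iio _)).inter (convex_half g (convex_Iio _)))
  have hNo : IsOpen N := Metric.isOpen_ball.inter
    ((isOpen_Iio.preimage f.continuous).inter (isOpen_Iio.preimage g.continuous))
  have hpN : p ∈ N := ⟨Metric.mem_ball_self hε, by simp, by simp⟩
  obtain ⟨q, hqN, hqf, hqg⟩ := exists_mem_lt_and_lt (f := f) (g := g) (v := a - p + (b - p))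
    (hNo.mem_nhds hpN) (by rw [map_add, hfa, hfb]; norm_num) (by rw [map_add, hga, hgb]; norm_num)
  refine ⟨N, Set.inter_subset_left.trans hεU, hNo, hpN,
    N ∩ (f ⁻¹' Set.Ioi (f p) ∩ g ⁻¹' Set.Ioi (g p)),
    N ∩ f ⁻¹' Set.Iio (f p) ∪ N ∩ g ⁻¹' Set.Iio (g p),
    (hN.inter ((convex_half f (convex_Ioi _)).inter
      (convex_half g (convex_Ioi _)))).isPreconnected,
    IsPreconnected.union q ⟨hqN, hqf⟩ ⟨hqN, hqg⟩
      (hN.inter (convex_half f (convex_Iio _))).isPreconnected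
      (hN.inter (convex_half g (convex_Iio _))).isPreconnected, ?_⟩
  rw [← Set.inter_union_distrib_left, ← Set.inter_union_distrib_left]
  ext x
  refine and_congr_right fun hx => ?_
  have hfx : f x < f p + 1 := hx.2.1
  have hgx : g x < g p + 1 := hx.2.2
  simp only [Set.mem_union, hsega, hsegb, Set.mem_Icc, Set.mem_inter_iff, Set.mem_preimage,
    Set.mem_Ioi, Set.mem_Iio]
  grind

theorem isTwoSidedAt_segment_union_segment (hE : Module.finrank ℝ E = 2) {a b p : E} (ha : a ≠ p)
    (hb : b ≠ p) (hab : segment ℝ p a ∩ segment ℝ p b = {p}) :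
    IsTwoSidedAt (segment ℝ p a ∪ segment ℝ p b) p := by
  by_cases h : LinearIndependent ℝ ![a - p, b - p]
  · exact isTwoSidedAt_corner hE h
  have between : p ∈ segment ℝ a b := by
    rw [mem_segment_iff_sameRay, ← neg_sub a p, sameRay_neg_swap]
    refine ((sameRay_or_sameRay_neg_iff_not_linearIndependent.2 h).resolve_left fun hray => ?_)
    rcases wbtw_total_of_sameRay_vsub_left (R := ℝ) (x := p) (y := a) (z := b) hray with hpab | hpba
    · exact ha (hab.subset ⟨right_mem_segment ℝ p a, mem_segment_iff_wbtw.2 hpab⟩)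
    · exact hb (hab.subset ⟨mem_segment_iff_wbtw.2 hpba, right_mem_segment ℝ p b⟩)
  rw [segment_symm ℝ p a, segment_union_segment between]
  refine isTwoSidedAt_segment hE ?_ (mem_openSegment_of_ne_left_right ha hb between)
  rintro rfl
  rw [segment_same] at between
  exact ha between.symm

end PlaneSegments

section Polygon

variable {E : Type*} [NormedAddCommGroup E] [NormedSpace ℝ E] {n : ℕ} {v : ZMod n → E}

/-- The cyclic sequence `v` of at least three points is the list of corners of a simple closed
polygonal curve. This isolates the combinatorial clauses of `IsSimplePolygon`. -/
structure IsSimpleClosedPolyline (v : ZMod n → E) : Prop where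
  three_le : 3 ≤ n
  injective : Function.Injective v
  disjoint : ∀ i j : ZMod n, i ≠ j → j ≠ i + 1 → i ≠ j + 1 →
    segment ℝ (v i) (v (i + 1)) ∩ segment ℝ (v j) (v (j + 1)) = ∅
  inter_succ : ∀ i : ZMod n,
    segment ℝ (v i) (v (i + 1)) ∩ segment ℝ (v (i + 1)) (v (i + 1 + 1)) = {v (i + 1)}

theorem isPreconnected_iUnion_segment (v : ZMod n → E) :
    IsPreconnected (⋃ i, segment ℝ (v i) (v (i + 1))) := by
  rw [← ZMod.intCast_surjective.iUnion_comp]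
  refine IsPreconnected.iUnion_of_chain (fun k => (convex_segment _ _).isPreconnected) fun k => ?_
  refine ⟨v (k + 1), right_mem_segment ℝ _ _, ?_⟩
  rw [Int.succ_eq_succ, Int.succ, Int.cast_add, Int.cast_one]
  exact left_mem_segment ℝ _ _

namespace IsSimpleClosedPolyline

theorem finite (h : IsSimpleClosedPolyline v) : Finite (ZMod n) :=
  have : NeZero n := ⟨by have := h.three_le; omega⟩
  inferInstance

theorem ne_succ (h : IsSimpleClosedPolyline v) (i : ZMod n) : v i ≠ v (i + 1) := by
  have : Fact (1 < n) := ⟨by have := h.three_le; omega⟩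
  exact fun hi => one_ne_zero (left_eq_add.1 (h.injective hi))

theorem eq_corner_of_mem (h : IsSimpleClosedPolyline v) {i j : ZMod n} (hij : i ≠ j) {p : E}
    (hi : p ∈ segment ℝ (v i) (v (i + 1))) (hj : p ∈ segment ℝ (v j) (v (j + 1))) :
    (j = i + 1 ∨ i = j + 1) ∧ (j = i + 1 → p = v j) ∧ (i = j + 1 → p = v i) := by
  refine ⟨?_, ?_, ?_⟩
  · by_contra! hnot
    exact (h.disjoint i j hij hnot.1 hnot.2).subset ⟨hi, hj⟩
  · rintro rfl
    exact (h.inter_succ i).subset ⟨hi, hj⟩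
  · rintro rfl
    exact (h.inter_succ j).subset ⟨hj, hi⟩

theorem isTwoSidedAt_corner (h : IsSimpleClosedPolyline v) (hE : Module.finrank ℝ E = 2)
    (i : ZMod n) : IsTwoSidedAt (⋃ i, segment ℝ (v i) (v (i + 1))) (v (i + 1)) := by
  have := h.finite
  refine IsTwoSidedAt.iUnion (s := {i, i + 1}) ?_ (fun j _ => isClosed_segment _ _)
    fun j hj hmem => ?_
  · rw [Set.biUnion_insert, Set.biUnion_singleton, segment_symm]
    refine isTwoSidedAt_segment_union_segment hE (h.ne_succ i) (h.ne_succ (i + 1)).symm ?_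
    rw [segment_symm, h.inter_succ]
  · obtain ⟨hji, hij⟩ : j ≠ i ∧ j ≠ i + 1 := by simpa using hj
    obtain ⟨hadj, hnext, -⟩ := h.eq_corner_of_mem hij.symm (left_mem_segment ℝ _ _) hmem
    have hj2 : j = i + 1 + 1 := hadj.resolve_right fun hj' => hji (add_right_cancel hj').symm
    exact h.ne_succ (i + 1) (hj2 ▸ hnext hj2)

theorem isTwoSidedAt_edge (h : IsSimpleClosedPolyline v) (hE : Module.finrank ℝ E = 2)
    {i : ZMod n} {p : E} (hp : p ∈ segment ℝ (v i) (v (i + 1))) (hpi : v i ≠ p)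
    (hpi' : v (i + 1) ≠ p) : IsTwoSidedAt (⋃ i, segment ℝ (v i) (v (i + 1))) p := by
  have := h.finite
  refine IsTwoSidedAt.iUnion (s := {i}) ?_ (fun j _ => isClosed_segment _ _)
    fun j hj hmem => ?_
  · rw [Set.biUnion_singleton]
    exact isTwoSidedAt_segment hE (h.ne_succ i) (mem_openSegment_of_ne_left_right hpi hpi' hp)
  · obtain ⟨hadj, hnext, hprev⟩ := h.eq_corner_of_mem (Ne.symm hj) hp hmem
    rcases hadj with hj' | hj'
    · exact hpi' (hj' ▸ (hnext hj').symm)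
    · exact hpi (hprev hj').symm

theorem isTwoSidedAt (h : IsSimpleClosedPolyline v) (hE : Module.finrank ℝ E = 2) {p : E}
    (hp : p ∈ ⋃ i, segment ℝ (v i) (v (i + 1))) :
    IsTwoSidedAt (⋃ i, segment ℝ (v i) (v (i + 1))) p := by
  obtain ⟨i, hi⟩ := Set.mem_iUnion.1 hp
  rcases eq_or_ne (v i) p with rfl | hpi
  · simpa only [sub_add_cancel] using h.isTwoSidedAt_corner hE (i - 1)
  rcases eq_or_ne (v (i + 1)) p with rfl | hpi'
  · exact h.isTwoSidedAt_corner hE i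
  exact h.isTwoSidedAt_edge hE hi hpi hpi'

end IsSimpleClosedPolyline

theorem IsSimplePolygon.isBounded {B : Set Pt} (hB : IsSimplePolygon B) : Bornology.IsBounded B :=
  let ⟨_, _, _, _, hcpt, _⟩ := hB
  hcpt.isBounded

theorem IsSimplePolygon.isPreconnected_compl {B : Set Pt} (hB : IsSimplePolygon B) :
    IsPreconnected Bᶜ := by
  obtain ⟨n, v, hn, hinj, hcpt, hreg, hfr, hdisj, hsucc⟩ := hB
  have hv : IsSimpleClosedPolyline v := ⟨hn, hinj, hdisj, hsucc⟩
  have hE : Module.finrank ℝ Pt = 2 := by simp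
  refine isPreconnected_of_isPreconnected_frontier hcpt.isClosed.isOpen_compl ?_ fun p hp => ?_
  · rw [frontier_compl, hfr]
    exact isPreconnected_iUnion_segment v
  · rw [frontier_compl] at hp
    refine IsTwoSidedAt.exists_nhds_isPreconnected_inter_compl hcpt.isClosed
      (hreg.subset (hcpt.isClosed.frontier_subset hp)) ?_
    rw [hfr] at hp ⊢
    exact hv.isTwoSidedAt hE hp

end Polygon

section PathEdges

variable {α β : Type*}

/-- The consecutive pairs of a list, that is the directed edges of the polygonal path with this
list of vertices. -/
def pathEdges (L : List α) : List (α × α) := L.zip L.tail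

@[simp] theorem pathEdges_nil : pathEdges ([] : List α) = [] := rfl

@[simp] theorem pathEdges_singleton (a : α) : pathEdges [a] = [] := rfl

@[simp] theorem pathEdges_cons_cons (a b : α) (r : List α) :
    pathEdges (a :: b :: r) = (a, b) :: pathEdges (b :: r) := rfl

theorem fst_mem_of_mem_pathEdges {L : List α} {e : α × α} (he : e ∈ pathEdges L) : e.1 ∈ L :=
  (List.of_mem_zip he).1

theorem snd_mem_of_mem_pathEdges {L : List α} {e : α × α} (he : e ∈ pathEdges L) : e.2 ∈ L :=
  List.mem_of_mem_tail (List.of_mem_zip he).2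

theorem pathEdges_map (f : α → β) (L : List α) :
    pathEdges (L.map f) = (pathEdges L).map (Prod.map f f) := by
  rw [pathEdges, pathEdges, ← List.map_tail, List.zip_map]

@[to_additive]
theorem prod_map_pathEdges_of_cocycle {M : Type*} [Monoid M] (φ : α → α → M) {L : List α}
    (hone : ∀ a ∈ L, φ a a = 1)
    (hmul : ∀ a ∈ L, ∀ b ∈ L, ∀ c ∈ L, φ a b * φ b c = φ a c) {s t : α}
    (hs : L.head? = some s) (ht : L.getLast? = some t) :
    ((pathEdges L).map fun e => φ e.1 e.2).prod = φ s t := by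
  induction L generalizing s with
  | nil => simp at hs
  | cons a r ih =>
    obtain rfl : a = s := by simpa using hs
    cases r with
    | nil =>
      obtain rfl : a = t := by simpa using ht
      simpa using (hone a (by simp)).symm
    | cons b r =>
      rw [List.getLast?_cons_cons] at ht
      rw [pathEdges_cons_cons, List.map_cons, List.prod_cons,
        ih (fun x hx => hone x (.tail _ hx))
          (fun x hx y hy z hz => hmul x (.tail _ hx) y (.tail _ hy) z (.tail _ hz)) rfl ht]
      exact hmul a (by simp) b (by simp) t (.tail _ (List.mem_of_getLast? ht))

end PathEdges

section PathIn

variable {B : Set Pt} {L : List Pt} {a b : Pt} {r : List Pt}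

theorem pathIn_cons_cons_iff : PathIn B (a :: b :: r) ↔ segment ℝ a b ⊆ B ∧ PathIn B (b :: r) := by
  refine ⟨fun h => ?_, fun h => ⟨List.forall_mem_cons.2 ⟨h.1 (left_mem_segment ℝ a b), h.2.1⟩,
    List.isChain_cons_cons.2 ⟨h.1, h.2.2⟩⟩⟩
  obtain ⟨hseg, hchain⟩ := List.isChain_cons_cons.1 h.2
  exact ⟨hseg, (List.forall_mem_cons.1 h.1).2, hchain⟩

theorem PathIn.segment_subset (h : PathIn B L) {e : Pt × Pt} (he : e ∈ pathEdges L) :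
    segment ℝ e.1 e.2 ⊆ B := by
  induction L with
  | nil => simp at he
  | cons a r ih =>
    cases r with
    | nil => simp at he
    | cons b r =>
      rw [pathIn_cons_cons_iff] at h
      rw [pathEdges_cons_cons, List.mem_cons] at he
      rcases he with rfl | he
      · exact h.1
      · exact ih h.2 he

/-- `L` is a polygonal path within `B` from `s` to `t`: the part common to `IsEucShortestIn` and
`IsL1ShortestIn`. -/
structure JoinsIn (B : Set Pt) (s t : Pt) (L : List Pt) : Prop where
  pathIn : PathIn B L
  head?_eq : L.head? = some s
  getLast?_eq : L.getLast? = some t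

end PathIn

section LogIncrement

open scoped ComplexOrder

/-- The identification of the coordinate plane with `ℂ`. -/
noncomputable def toC : Pt ≃L[ℝ] ℂ := Complex.equivRealProdCLM.symm

theorem toC_re (p : Pt) : (toC p).re = p.1 := rfl

theorem toC_im (p : Pt) : (toC p).im = p.2 := rfl

theorem toC_sub_ne_zero {p q : Pt} (h : p ≠ q) : toC p - toC q ≠ 0 :=
  sub_ne_zero.2 (toC.injective.ne h)

/-- The complex ratio whose argument is the angle under which `q` sees the directed segment `e`,
and whose norm is the ratio of the distances of `q` to the endpoints. -/
noncomputable def turn (q : Pt) (e : Pt × Pt) : ℂ := (toC e.2 - toC q) / (toC e.1 - toC q)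

theorem turn_ne_zero {q : Pt} {e : Pt × Pt} (h₁ : e.1 ≠ q) (h₂ : e.2 ≠ q) : turn q e ≠ 0 :=
  div_ne_zero (toC_sub_ne_zero h₂) (toC_sub_ne_zero h₁)

theorem sameRay_iff_div_nonneg {z w : ℂ} : SameRay ℝ z w ↔ 0 ≤ w / z := by
  rw [← Complex.arg_eq_zero_iff_zero_le, ← Complex.sameRay_iff_arg_div_eq_zero,
    SameRay.sameRay_comm]

theorem turn_nonneg_iff {q : Pt} {e : Pt × Pt} :
    0 ≤ turn q e ↔ SameRay ℝ (e.1 - q) (e.2 - q) := by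
  rw [turn, ← sameRay_iff_div_nonneg, ← map_sub, ← map_sub]
  exact toC.injective.sameRay_map_iff

theorem turn_nonpos_iff {q : Pt} {e : Pt × Pt} : turn q e ≤ 0 ↔ q ∈ segment ℝ e.1 e.2 := by
  rw [turn, ← neg_nonneg, ← div_neg, ← sameRay_iff_div_nonneg, neg_sub, ← map_sub, ← map_sub,
    mem_segment_iff_sameRay]
  exact toC.injective.sameRay_map_iff

theorem turn_mem_slitPlane {q : Pt} {e : Pt × Pt} (h : q ∉ segment ℝ e.1 e.2) :
    turn q e ∈ Complex.slitPlane :=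
  Complex.mem_slitPlane_iff_not_le_zero.2 (mt turn_nonpos_iff.1 h)

theorem continuousAt_turn {q : Pt} {e : Pt × Pt} (h : e.1 ≠ q) :
    ContinuousAt (fun x => turn x e) q :=
  ContinuousAt.div (by fun_prop) (by fun_prop) (toC_sub_ne_zero h)

/-- The total increment of a continuous branch of `log (z - q)` along the directed edges in `E`. -/
noncomputable def logIncrement (q : Pt) (E : List (Pt × Pt)) : ℂ :=
  (E.map fun e => Complex.log (turn q e)).sum

theorem continuousAt_logIncrement {q : Pt} {E : List (Pt × Pt)}
    (h : ∀ e ∈ E, q ∉ segment ℝ e.1 e.2) : ContinuousAt (fun x => logIncrement x E) q := by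
  refine tendsto_list_sum E fun e he => ?_
  have hne : e.1 ≠ q := fun h1 => h e he (h1 ▸ left_mem_segment ℝ e.1 e.2)
  exact (continuousAt_turn hne).clog (turn_mem_slitPlane (h e he))

theorem exp_logIncrement {q s t : Pt} {L : List Pt} (hq : q ∉ L) (hs : L.head? = some s)
    (ht : L.getLast? = some t) : Complex.exp (logIncrement q (pathEdges L)) = turn q (s, t) := by
  have hne : ∀ p ∈ L, p ≠ q := fun p hp hpq => hq (hpq ▸ hp)
  calc Complex.exp (logIncrement q (pathEdges L))
      = ((pathEdges L).map fun e => turn q (e.1, e.2)).prod := by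
        rw [logIncrement, Complex.exp_list_sum, List.map_map]
        refine congrArg _ (List.map_congr_left fun e he => Complex.exp_log ?_)
        exact turn_ne_zero (hne _ (fst_mem_of_mem_pathEdges he))
          (hne _ (snd_mem_of_mem_pathEdges he))
    _ = turn q (s, t) := prod_map_pathEdges_of_cocycle (fun a b => turn q (a, b))
        (fun a ha => div_self (toC_sub_ne_zero (hne a ha)))
        (fun a _ b hb c _ => div_mul_div_cancel₀' (toC_sub_ne_zero (hne b hb)) _ _) hs ht

theorem log_div_of_re_pos {z w : ℂ} (hz : 0 < z.re) (hw : 0 < w.re) :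
    Complex.log (z / w) = Complex.log z - Complex.log w := by
  have ne_zero : ∀ {x : ℂ}, 0 < x.re → x ≠ 0 := fun hx h => by simp [h] at hx
  have arg_lt : ∀ {x : ℂ}, 0 < x.re → |x.arg| < Real.pi / 2 := fun hx =>
    Complex.abs_arg_lt_pi_div_two_iff.2 (Or.inl hx)
  obtain ⟨hz₁, hz₂⟩ := abs_lt.1 (arg_lt hz)
  obtain ⟨hw₁, hw₂⟩ := abs_lt.1 (arg_lt hw)
  have hwpi : w.arg ≠ Real.pi := by linarith [Real.pi_pos]
  rw [div_eq_mul_inv, (Complex.log_mul_eq_add_log_iff (ne_zero hz) (inv_ne_zero (ne_zero hw))).2,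
    Complex.log_inv w hwpi, sub_eq_add_neg]
  rw [Complex.arg_inv, if_neg hwpi]
  constructor <;> linarith

theorem logIncrement_of_forall_fst_lt {q s t : Pt} {L : List Pt} (hq : ∀ p ∈ L, p.1 < q.1)
    (hs : L.head? = some s) (ht : L.getLast? = some t) :
    logIncrement q (pathEdges L) = Complex.log (turn q (s, t)) := by
  have log_turn : ∀ a ∈ L, ∀ b ∈ L, Complex.log (turn q (a, b)) =
      Complex.log (toC q - toC b) - Complex.log (toC q - toC a) := fun a ha b hb => by
    rw [turn, ← neg_div_neg_eq, neg_sub, neg_sub]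
    exact log_div_of_re_pos (sub_pos.2 (hq b hb)) (sub_pos.2 (hq a ha))
  refine sum_map_pathEdges_of_cocycle (fun a b => Complex.log (turn q (a, b)))
    (fun a ha => ?_) (fun a ha b hb c hc => ?_) hs ht
  · rw [log_turn a ha a ha, sub_self]
  · rw [log_turn a ha b hb, log_turn b hb c hc, log_turn a ha c hc, add_comm, sub_add_sub_cancel]

theorem eq_of_isPreconnected_of_exp_eq {X : Type*} [TopologicalSpace X] {S : Set X}
    (hS : IsPreconnected S) {f : X → ℂ} (hf : ContinuousOn f S) {x₀ : ℂ}
    (hexp : ∀ x ∈ S, Complex.exp (f x) = x₀) {x y : X} (hx : x ∈ S) (hy : y ∈ S) : f x = f y :=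
  Complex.isCoveringMap_exp.constOn_of_comp hS hf
    (fun a ha b hb => Subtype.ext ((hexp a ha).trans (hexp b hb).symm)) hx hy

theorem exists_forall_fst_lt_of_isBounded {B : Set Pt} (hB : Bornology.IsBounded B) :
    ∃ q : Pt, ∀ p ∈ B, p.1 < q.1 := by
  obtain ⟨R, hR⟩ := hB.bddAbove
  exact ⟨(R.1 + 1, 0), fun p hp => (hR hp).1.trans_lt (lt_add_one R.1)⟩

theorem logIncrement_eq_of_notMem {B : Set Pt} (hB : Bornology.IsBounded B)
    (hc : IsPreconnected Bᶜ) {s t q : Pt} {L M : List Pt} (hL : JoinsIn B s t L)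
    (hM : JoinsIn B s t M) (hq : q ∉ B) :
    logIncrement q (pathEdges L) = logIncrement q (pathEdges M) := by
  obtain ⟨hL, hLs, hLt⟩ := hL
  obtain ⟨hM, hMs, hMt⟩ := hM
  obtain ⟨r, hr⟩ := exists_forall_fst_lt_of_isBounded hB
  have hrB : r ∉ B := fun h => (hr r h).false
  have turn_ne : ∀ x ∉ B, turn x (s, t) ≠ 0 := fun x hx => turn_ne_zero
    (fun h => hx (h ▸ hL.1 s (List.mem_of_head? hLs)))
    (fun h => hx (h ▸ hL.1 t (List.mem_of_getLast? hLt)))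
  have hcont : ∀ P, PathIn B P → ContinuousOn (fun x => logIncrement x (pathEdges P)) Bᶜ :=
    fun P hP x hx => (continuousAt_logIncrement fun e he hxe =>
      hx (hP.segment_subset he hxe)).continuousWithinAt
  have hexp : ∀ x ∈ Bᶜ, Complex.exp
      (logIncrement x (pathEdges L) - logIncrement x (pathEdges M)) = 1 := fun x hx => by
    rw [Complex.exp_sub, exp_logIncrement (fun h => hx (hL.1 x h)) hLs hLt,
      exp_logIncrement (fun h => hx (hM.1 x h)) hMs hMt, div_self (turn_ne x hx)]
  have hr_eq : logIncrement r (pathEdges L) = logIncrement r (pathEdges M) := by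
    rw [logIncrement_of_forall_fst_lt (fun p hp => hr p (hL.1 p hp)) hLs hLt,
      logIncrement_of_forall_fst_lt (fun p hp => hr p (hM.1 p hp)) hMs hMt]
  refine sub_eq_zero.1 ?_
  calc logIncrement q (pathEdges L) - logIncrement q (pathEdges M)
      = logIncrement r (pathEdges L) - logIncrement r (pathEdges M) :=
        eq_of_isPreconnected_of_exp_eq hc ((hcont L hL).fun_sub (hcont M hM)) hexp hq hrB
    _ = 0 := sub_eq_zero.2 hr_eq

end LogIncrement

section VerticalCrossing

variable {c w : ℝ} {e : Pt × Pt}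

/-- The vertical line of abscissa `c` strictly separates the endpoints of the segment `e`. -/
def Crosses (c : ℝ) (e : Pt × Pt) : Prop := c ∈ Set.uIoo e.1.1 e.2.1

/-- The ordinate at which the line through the endpoints of `e` meets the vertical line of
abscissa `c`; meaningful only for non-vertical `e`. -/
noncomputable def height (c : ℝ) (e : Pt × Pt) : ℝ :=
  e.1.2 + (c - e.1.1) / (e.2.1 - e.1.1) * (e.2.2 - e.1.2)

theorem crosses_iff : Crosses c e ↔ e.1.1 < c ∧ c < e.2.1 ∨ e.2.1 < c ∧ c < e.1.1 := by
  rw [Crosses, Set.uIoo, Set.mem_Ioo, inf_lt_iff, lt_sup_iff]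
  constructor
  · rintro ⟨h₁ | h₁, h₂ | h₂⟩
    · exact absurd h₁ h₂.not_gt
    · exact Or.inl ⟨h₁, h₂⟩
    · exact Or.inr ⟨h₁, h₂⟩
    · exact absurd h₁ h₂.not_gt
  · rintro (⟨h₁, h₂⟩ | ⟨h₁, h₂⟩)
    · exact ⟨Or.inl h₁, Or.inr h₂⟩
    · exact ⟨Or.inr h₁, Or.inl h₂⟩

theorem crosses_iff_mul_neg : Crosses c e ↔ (e.1.1 - c) * (e.2.1 - c) < 0 := by
  rw [crosses_iff, mul_neg_iff]
  simp only [sub_pos, sub_neg]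
  tauto

theorem Crosses.abscissa_ne (h : Crosses c e) : e.2.1 - e.1.1 ≠ 0 := by
  rcases crosses_iff.1 h with h | h
  · exact (sub_pos.2 (h.1.trans h.2)).ne'
  · exact (sub_neg.2 (h.1.trans h.2)).ne

theorem Crosses.mem_segment (h : Crosses c e) : (c, height c e) ∈ segment ℝ e.1 e.2 := by
  have hne := h.abscissa_ne
  refine segment_eq_image' ℝ e.1 e.2 ▸ ⟨(c - e.1.1) / (e.2.1 - e.1.1), ⟨?_, ?_⟩, ?_⟩
  · rcases crosses_iff.1 h with h | h
    · exact div_nonneg (by linarith) (by linarith)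
    · exact div_nonneg_of_nonpos (by linarith) (by linarith)
  · rcases crosses_iff.1 h with h | h
    · exact (div_le_one (by linarith)).2 (by linarith)
    · exact (div_le_one_of_neg (by linarith)).2 (by linarith)
  · refine Prod.ext ?_ rfl
    simp [div_mul_cancel₀ _ hne]

theorem crosses_of_mem_segment (he₁ : e.1.1 ≠ c) (he₂ : e.2.1 ≠ c)
    (h : (c, w) ∈ segment ℝ e.1 e.2) : Crosses c e ∧ w = height c e := by
  rw [segment_eq_image'] at h
  obtain ⟨t, ⟨ht₀, ht₁⟩, ht⟩ := h
  obtain ⟨hc, hw⟩ : e.1.1 + t * (e.2.1 - e.1.1) = c ∧ e.1.2 + t * (e.2.2 - e.1.2) = w := by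
    simpa [Prod.ext_iff] using ht
  have t_pos : 0 < t := ht₀.lt_of_ne fun h => he₁ (by rw [← hc, ← h]; ring)
  have t_lt_one : t < 1 := ht₁.lt_of_ne fun h => he₂ (by rw [← hc, h]; ring)
  have hne : e.2.1 - e.1.1 ≠ 0 := fun h => he₁ (by rw [← hc, h]; ring)
  refine ⟨crosses_iff_mul_neg.2 ?_, ?_⟩
  · calc (e.1.1 - c) * (e.2.1 - c) = -(t * (1 - t) * (e.2.1 - e.1.1) ^ 2) := by rw [← hc]; ring
      _ < 0 := neg_neg_of_pos (by have := sub_pos.2 t_lt_one; positivity)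
  · rw [← hw, height, ← hc, add_sub_cancel_left, mul_div_cancel_right₀ _ hne]

theorem turn_im_mul_normSq (h : e.2.1 - e.1.1 ≠ 0) (he : e.1.1 ≠ c) :
    (turn (c, w) e).im * Complex.normSq (toC e.1 - toC (c, w)) =
      (e.2.1 - e.1.1) * (w - height c e) := by
  have hne : Complex.normSq (toC e.1 - toC (c, w)) ≠ 0 :=
    (map_ne_zero _).2 (toC_sub_ne_zero fun h => he (congrArg Prod.fst h))
  have hh : (e.2.1 - e.1.1) * height c e =
      (e.2.1 - e.1.1) * e.1.2 + (c - e.1.1) * (e.2.2 - e.1.2) := by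
    rw [height]
    field_simp
  rw [turn, Complex.div_im, sub_mul, div_mul_cancel₀ _ hne, div_mul_cancel₀ _ hne, mul_sub, hh]
  simp only [Complex.sub_re, Complex.sub_im, toC_re, toC_im]
  ring

theorem Crosses.turn_im_mul_turn_im_neg (h : Crosses c e) {y₁ y₂ : ℝ} (h₁ : y₁ < height c e)
    (h₂ : height c e < y₂) : (turn (c, y₁) e).im * (turn (c, y₂) e).im < 0 := by
  have hne := h.abscissa_ne
  have he : e.1.1 ≠ c := fun h' => by simp [crosses_iff_mul_neg, h'] at h
  have normSq_pos : ∀ w, 0 < Complex.normSq (toC e.1 - toC (c, w)) := fun w =>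
    Complex.normSq_pos.2 (toC_sub_ne_zero fun h => he (congrArg Prod.fst h))
  refine neg_of_mul_neg_left (b := Complex.normSq (toC e.1 - toC (c, y₁)) *
    Complex.normSq (toC e.1 - toC (c, y₂))) ?_ (mul_pos (normSq_pos y₁) (normSq_pos y₂)).le
  rw [mul_mul_mul_comm, turn_im_mul_normSq hne he, turn_im_mul_normSq hne he, mul_mul_mul_comm]
  exact mul_neg_of_pos_of_neg (mul_self_pos.2 hne)
    (mul_neg_of_neg_of_pos (sub_neg.2 h₁) (sub_pos.2 h₂))

open scoped ComplexOrder in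
theorem Crosses.neg_turn_mem_slitPlane (h : Crosses c e) (w : ℝ) :
    -turn (c, w) e ∈ Complex.slitPlane := by
  rw [Complex.mem_slitPlane_iff_not_le_zero, neg_nonpos, turn_nonneg_iff]
  intro hray
  have hfst : SameRay ℝ (e.1.1 - c) (e.2.1 - c) := hray.map (LinearMap.fst ℝ ℝ ℝ)
  rw [crosses_iff_mul_neg] at h
  obtain ⟨r, hr, hrx⟩ := hfst.exists_nonneg_left (left_ne_zero_of_mul h.ne)
  rw [← hrx, smul_eq_mul, mul_left_comm] at h
  exact h.not_ge (mul_nonneg hr (mul_self_nonneg _))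

theorem log_neg_sub_log_im_of_im_pos {z : ℂ} (h : 0 < z.im) :
    (Complex.log (-z) - Complex.log z).im = -Real.pi := by
  rw [Complex.sub_im, Complex.log_im, Complex.log_im, Complex.arg_neg_eq_arg_sub_pi_of_im_pos h,
    sub_sub_cancel_left]

theorem log_neg_sub_log_im_of_im_neg {z : ℂ} (h : z.im < 0) :
    (Complex.log (-z) - Complex.log z).im = Real.pi := by
  rw [Complex.sub_im, Complex.log_im, Complex.log_im, Complex.arg_neg_eq_arg_add_pi_of_im_neg h,
    add_sub_cancel_left]

theorem log_neg_sub_log_ne {z w : ℂ} (h : z.im * w.im < 0) :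
    Complex.log (-z) - Complex.log z ≠ Complex.log (-w) - Complex.log w := by
  intro heq
  have him := congrArg Complex.im heq
  rcases mul_neg_iff.1 h with ⟨hz, hw⟩ | ⟨hz, hw⟩
  · rw [log_neg_sub_log_im_of_im_pos hz, log_neg_sub_log_im_of_im_neg hw] at him
    linarith [Real.pi_pos]
  · rw [log_neg_sub_log_im_of_im_neg hz, log_neg_sub_log_im_of_im_pos hw] at him
    linarith [Real.pi_pos]

theorem logIncrement_append_cons (q : Pt) (E₁ E₂ : List (Pt × Pt)) (e : Pt × Pt) :
    logIncrement q (E₁ ++ e :: E₂) = logIncrement q (E₁ ++ E₂) + Complex.log (turn q e) := by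
  simp only [logIncrement, List.map_append, List.map_cons, List.sum_append, List.sum_cons]
  ring

theorem exp_logIncrement_add_log_neg_turn {q s t : Pt} {L M : List Pt} {e : Pt × Pt}
    {E₁ E₂ : List (Pt × Pt)} (hqL : q ∉ L) (hqM : q ∉ M) (hL : pathEdges L = E₁ ++ e :: E₂)
    (hLs : L.head? = some s) (hLt : L.getLast? = some t) (hMs : M.head? = some s)
    (hMt : M.getLast? = some t) :
    Complex.exp (logIncrement q (E₁ ++ E₂) - logIncrement q (pathEdges M) +
      Complex.log (-turn q e)) = -1 := by
  have hne : ∀ {p}, p ∈ L → p ≠ q := fun hp hpq => hqL (hpq ▸ hp)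
  have he : e ∈ pathEdges L := hL ▸ List.mem_append_right E₁ List.mem_cons_self
  have turn_e : turn q e ≠ 0 :=
    turn_ne_zero (hne (fst_mem_of_mem_pathEdges he)) (hne (snd_mem_of_mem_pathEdges he))
  have turn_st : turn q (s, t) ≠ 0 :=
    turn_ne_zero (hne (List.mem_of_head? hLs)) (hne (List.mem_of_getLast? hLt))
  have hexp : Complex.exp (logIncrement q (E₁ ++ E₂)) * turn q e = turn q (s, t) := by
    rw [← exp_logIncrement hqL hLs hLt, hL, logIncrement_append_cons, Complex.exp_add,
      Complex.exp_log turn_e]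
  rw [Complex.exp_add, Complex.exp_sub, exp_logIncrement hqM hMs hMt,
    Complex.exp_log (neg_ne_zero.2 turn_e), div_mul_eq_mul_div, mul_neg, hexp, neg_div,
    div_self turn_st]

theorem exists_mem_segment_of_crosses {B : Set Pt} (hB : Bornology.IsBounded B)
    (hc : IsPreconnected Bᶜ) {s t : Pt} {L M : List Pt} (hL : JoinsIn B s t L)
    (hM : JoinsIn B s t M) (hLc : ∀ p ∈ L, p.1 ≠ c) (hMc : ∀ p ∈ M, p.1 ≠ c)
    {E₁ E₂ : List (Pt × Pt)} (hE : pathEdges L = E₁ ++ e :: E₂) (he : Crosses c e) {y₁ y₂ : ℝ}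
    (h₁ : y₁ < height c e) (h₂ : height c e < y₂) (hy₁ : (c, y₁) ∉ B) (hy₂ : (c, y₂) ∉ B) :
    ∃ f ∈ E₁ ++ E₂ ++ pathEdges M, ∃ w ∈ Set.Icc y₁ y₂, (c, w) ∈ segment ℝ f.1 f.2 := by
  by_contra! hmiss
  -- Replacing `log z` by `log (-z)` for the edge `e` keeps the increment continuous where the
  -- vertical line meets `e`, but the two differ by `π i` above and `-π i` below, or vice versa.
  let G : ℝ → ℂ := fun w => logIncrement (c, w) (E₁ ++ E₂) - logIncrement (c, w) (pathEdges M) +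
    Complex.log (-turn (c, w) e)
  have eL : e ∈ pathEdges L := hE ▸ List.mem_append_right E₁ List.mem_cons_self
  have hcont : ContinuousOn G (Set.Icc y₁ y₂) := fun w hw => by
    have hΛ : ∀ E ⊆ E₁ ++ E₂ ++ pathEdges M,
        ContinuousAt (fun w => logIncrement (c, w) E) w := fun E hE =>
      ContinuousAt.comp (f := fun w => (c, w))
        (continuousAt_logIncrement fun f hf => hmiss f (hE hf) w hw) (by fun_prop)
    have hturn : ContinuousAt (fun w => turn (c, w) e) w :=
      ContinuousAt.comp (f := fun w => (c, w)) (continuousAt_turn fun h =>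
        hLc _ (fst_mem_of_mem_pathEdges eL) (congrArg Prod.fst h)) (by fun_prop)
    exact (((hΛ _ (List.subset_append_left _ _)).sub (hΛ _ (List.subset_append_right _ _))).add
      (hturn.neg.clog (he.neg_turn_mem_slitPlane w))).continuousWithinAt
  have hexp : ∀ w ∈ Set.Icc y₁ y₂, Complex.exp (G w) = -1 := fun w _ =>
    exp_logIncrement_add_log_neg_turn (fun h => hLc _ h rfl) (fun h => hMc _ h rfl) hE hL.head?_eq
      hL.getLast?_eq hM.head?_eq hM.getLast?_eq
  have hends : ∀ y, (c, y) ∉ B → G y = Complex.log (-turn (c, y) e) -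
      Complex.log (turn (c, y) e) := fun y hy => by
    have := logIncrement_eq_of_notMem hB hc hL hM hy
    rw [hE, logIncrement_append_cons] at this
    simp only [G, ← this]
    ring
  have hle : y₁ ≤ y₂ := (h₁.trans h₂).le
  refine log_neg_sub_log_ne (he.turn_im_mul_turn_im_neg h₁ h₂) ?_
  rw [← hends y₁ hy₁, ← hends y₂ hy₂]
  exact eq_of_isPreconnected_of_exp_eq isPreconnected_Icc hcont hexp (Set.left_mem_Icc.2 hle)
    (Set.right_mem_Icc.2 hle)

end VerticalCrossing

section Visibility

variable {α : Type*} [LinearOrder α] {S Z : Set α} {y : α}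

theorem exists_gt_notMem_forall_notMem_Icc [NoMaxOrder α] (hS : BddAbove S) (hy : y ∈ S)
    (hZ : Z.Finite) (hZS : Z ⊆ S) (hsep : ∀ z ∈ Z, ¬ Set.uIcc y z ⊆ S) :
    ∃ u, y < u ∧ u ∉ S ∧ ∀ z ∈ Z, z ∉ Set.Icc y u := by
  induction Z, hZ using Set.Finite.induction_on with
  | empty =>
    obtain ⟨R, hR⟩ := hS
    obtain ⟨u, hu⟩ := exists_gt R
    exact ⟨u, (hR hy).trans_lt hu, fun h => (hR h).not_gt hu, fun z hz => hz.elim⟩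
  | @insert z Z _ _ ih =>
    obtain ⟨u, hyu, huS, hu⟩ := ih (fun x hx => hZS (.inr hx)) fun x hx => hsep x (.inr hx)
    by_cases hz : z ∈ Set.Icc y u
    · obtain ⟨b, hb, hbS⟩ := Set.not_subset.1 (hsep z (.inl rfl))
      rw [Set.uIcc_of_le hz.1] at hb
      have hyb : y < b := hb.1.lt_of_ne fun h => hbS (h ▸ hy)
      have hbz : b < z := hb.2.lt_of_ne fun h => hbS (h ▸ hZS (.inl rfl))
      refine ⟨b, hyb, hbS, Set.forall_mem_insert.2 ⟨fun h => hbz.not_ge h.2, fun x hx hxb => ?_⟩⟩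
      exact hu x hx ⟨hxb.1, hxb.2.trans (hbz.le.trans hz.2)⟩
    · exact ⟨u, hyu, huS, Set.forall_mem_insert.2 ⟨hz, hu⟩⟩

theorem exists_lt_notMem_forall_notMem_Icc [NoMinOrder α] (hS : BddBelow S) (hy : y ∈ S)
    (hZ : Z.Finite) (hZS : Z ⊆ S) (hsep : ∀ z ∈ Z, ¬ Set.uIcc y z ⊆ S) :
    ∃ u, u < y ∧ u ∉ S ∧ ∀ z ∈ Z, z ∉ Set.Icc u y := by
  obtain ⟨u, hu, huS, huZ⟩ := exists_gt_notMem_forall_notMem_Icc (α := αᵒᵈ)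
    (S := OrderDual.ofDual ⁻¹' S) (Z := OrderDual.ofDual ⁻¹' Z) (y := OrderDual.toDual y)
    hS.dual hy hZ hZS fun z hz h => hsep _ hz ((Set.uIcc_toDual y _).ge.trans h)
  exact ⟨u, hu, huS, fun z hz h => huZ z hz h.symm⟩

variable {B : Set Pt} {c : ℝ} {e f g : Pt × Pt}

/-- The points of `e` and `f` on the vertical line of abscissa `c` see each other within `B`. -/
def Sees (B : Set Pt) (c : ℝ) (e f : Pt × Pt) : Prop :=
  Set.uIcc (height c e) (height c f) ⊆ Prod.mk c ⁻¹' B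

theorem Sees.symm (h : Sees B c e f) : Sees B c f e := by
  rwa [Sees, Set.uIcc_comm]

theorem Sees.trans (h₁ : Sees B c e f) (h₂ : Sees B c f g) : Sees B c e g :=
  Set.uIcc_subset_uIcc_union_uIcc.trans (Set.union_subset h₁ h₂)

theorem exists_notMem_forall_height_notMem_Icc (hB : Bornology.IsBounded B)
    (he : (c, height c e) ∈ B) {F : List (Pt × Pt)} (hF : ∀ f ∈ F, segment ℝ f.1 f.2 ⊆ B)
    (hsep : ∀ f ∈ F, Crosses c f → ¬ Sees B c e f) :
    ∃ y₁ < height c e, ∃ y₂ > height c e, (c, y₁) ∉ B ∧ (c, y₂) ∉ B ∧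
      ∀ f ∈ F, Crosses c f → height c f ∉ Set.Icc y₁ y₂ := by
  let Z : Set ℝ := height c '' {f | f ∈ F ∧ Crosses c f}
  have hfin : Z.Finite := (F.finite_toSet.subset fun f hf => hf.1).image _
  have hsub : Z ⊆ Prod.mk c ⁻¹' B :=
    Set.image_subset_iff.2 fun f hf => hF f hf.1 hf.2.mem_segment
  have hZsep : ∀ z ∈ Z, ¬ Set.uIcc (height c e) z ⊆ Prod.mk c ⁻¹' B :=
    Set.forall_mem_image.2 fun f hf => hsep f hf.1 hf.2
  obtain ⟨R, hR⟩ := hB.bddAbove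
  obtain ⟨r, hr⟩ := hB.bddBelow
  obtain ⟨y₂, hy₂, hy₂B, habove⟩ := exists_gt_notMem_forall_notMem_Icc
    (S := Prod.mk c ⁻¹' B) ⟨R.2, fun w hw => (hR hw).2⟩ he hfin hsub hZsep
  obtain ⟨y₁, hy₁, hy₁B, hbelow⟩ := exists_lt_notMem_forall_notMem_Icc
    (S := Prod.mk c ⁻¹' B) ⟨r.2, fun w hw => (hr hw).2⟩ he hfin hsub hZsep
  refine ⟨y₁, hy₁, y₂, hy₂, hy₁B, hy₂B, fun f hf hfc hmem => ?_⟩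
  have hfZ : height c f ∈ Z := Set.mem_image_of_mem _ ⟨hf, hfc⟩
  rcases le_total (height c e) (height c f) with h | h
  · exact habove _ hfZ ⟨h, hmem.2⟩
  · exact hbelow _ hfZ ⟨hmem.1, h⟩

theorem exists_sees_of_forall_not_sees (hB : Bornology.IsBounded B) (hc : IsPreconnected Bᶜ)
    {s t : Pt} {L M : List Pt} (hL : JoinsIn B s t L) (hM : JoinsIn B s t M)
    (hLc : ∀ p ∈ L, p.1 ≠ c) (hMc : ∀ p ∈ M, p.1 ≠ c)
    {E₁ E₂ : List (Pt × Pt)} (hE : pathEdges L = E₁ ++ e :: E₂) (he : Crosses c e)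
    (hsep : ∀ f ∈ E₁ ++ E₂, Crosses c f → ¬ Sees B c e f) :
    ∃ f ∈ pathEdges M, Crosses c f ∧ Sees B c e f := by
  by_contra! hunseen
  have mem_L : ∀ f ∈ E₁ ++ E₂, f ∈ pathEdges L := fun f hf => hE ▸
    ((List.sublist_cons_self e E₂).append_left E₁).subset hf
  have heB : (c, height c e) ∈ B := hL.pathIn.segment_subset
    (hE ▸ List.mem_append_right E₁ List.mem_cons_self) he.mem_segment
  obtain ⟨y₁, hy₁, y₂, hy₂, hy₁B, hy₂B, hmiss⟩ :=
    exists_notMem_forall_height_notMem_Icc hB heB (F := E₁ ++ E₂ ++ pathEdges M)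
      (List.forall_mem_append.2
        ⟨fun f hf => hL.pathIn.segment_subset (mem_L f hf),
          fun f hf => hM.pathIn.segment_subset hf⟩)
      (List.forall_mem_append.2 ⟨hsep, hunseen⟩)
  obtain ⟨f, hf, w, hw, hwf⟩ := exists_mem_segment_of_crosses hB hc hL hM hLc hMc hE
    he hy₁ hy₂ hy₁B hy₂B
  have hne : f.1.1 ≠ c ∧ f.2.1 ≠ c := by
    rcases List.mem_append.1 hf with hf | hf
    · exact ⟨hLc _ (fst_mem_of_mem_pathEdges (mem_L f hf)),
        hLc _ (snd_mem_of_mem_pathEdges (mem_L f hf))⟩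
    · exact ⟨hMc _ (fst_mem_of_mem_pathEdges hf), hMc _ (snd_mem_of_mem_pathEdges hf)⟩
  obtain ⟨hfc, rfl⟩ := crosses_of_mem_segment hne.1 hne.2 hwf
  exact hmiss f hf hfc hw

end Visibility

section EuclideanShortest

variable {B : Set Pt} {a b p q s t : Pt} {L r : List Pt} {c : ℝ}

theorem d2_eq_dist (p q : Pt) : d2 p q = dist (toC p) (toC q) :=
  (Complex.dist_eq_re_im (toC p) (toC q)).symm

theorem d2_triangle (p q r : Pt) : d2 p r ≤ d2 p q + d2 q r := by
  simp only [d2_eq_dist]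
  exact dist_triangle _ _ _

theorem d2_add_d2_of_mem_segment (h : p ∈ segment ℝ a b) : d2 a p + d2 p b = d2 a b := by
  simp only [d2_eq_dist]
  refine dist_add_dist_of_mem_segment ?_
  exact (image_segment ℝ toC.toLinearMap.toAffineMap a b).subset (Set.mem_image_of_mem _ h)

theorem abs_snd_sub_snd_lt_d2 (h : p.1 ≠ q.1) : |p.2 - q.2| < d2 p q := by
  rw [d2_eq_dist, dist_eq_norm]
  exact (Complex.abs_im_lt_norm (z := toC p - toC q)).2 (sub_ne_zero.2 h)

theorem d2_vertical (c y z : ℝ) : d2 (c, y) (c, z) = |y - z| := by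
  rw [d2, sub_self, zero_pow two_ne_zero, zero_add, Real.sqrt_sq_eq_abs]

theorem exists_pathIn_of_mem_edge (hP : PathIn B (b :: r)) {f : Pt × Pt}
    (hf : f ∈ pathEdges (b :: r)) (hq : q ∈ segment ℝ f.1 f.2) :
    ∃ Q, PathIn B (q :: Q) ∧ (q :: Q).getLast? = (b :: r).getLast? ∧
      d2 b q + elen (q :: Q) ≤ elen (b :: r) := by
  induction r generalizing b with
  | nil => simp at hf
  | cons x r ih =>
    obtain ⟨hbx, hxr⟩ := pathIn_cons_cons_iff.1 hP
    rw [pathEdges_cons_cons, List.mem_cons] at hf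
    rcases hf with rfl | hf
    · have hqx : segment ℝ q x ⊆ B :=
        ((convex_segment b x).segment_subset hq (right_mem_segment ℝ b x)).trans hbx
      refine ⟨x :: r, pathIn_cons_cons_iff.2 ⟨hqx, hxr⟩, by simp only [List.getLast?_cons_cons], ?_⟩
      rw [elen, elen, ← add_assoc, d2_add_d2_of_mem_segment hq]
    · obtain ⟨Q, hQ, hlast, hlen⟩ := ih hxr hf
      refine ⟨Q, hQ, by rw [hlast, List.getLast?_cons_cons], ?_⟩
      rw [elen]
      linarith [d2_triangle b x q]

theorem IsEucShortestIn.joinsIn (h : IsEucShortestIn B s t L) : JoinsIn B s t L :=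
  ⟨h.1, h.2.1, h.2.2.1⟩

theorem IsEucShortestIn.tail (h : IsEucShortestIn B s t (a :: b :: r)) :
    IsEucShortestIn B b t (b :: r) := by
  obtain ⟨hP, hs, ht, hmin⟩ := h
  obtain ⟨hab, hbr⟩ := pathIn_cons_cons_iff.1 hP
  refine ⟨hbr, rfl, by rwa [List.getLast?_cons_cons] at ht, fun M hM hMs hMt => ?_⟩
  obtain ⟨M, rfl⟩ := List.head?_eq_some_iff.1 hMs
  have hle := hmin (a :: b :: M) (pathIn_cons_cons_iff.2 ⟨hab, hM⟩) hs
    (by rwa [List.getLast?_cons_cons])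
  simpa only [elen, add_le_add_iff_left] using hle

theorem Sees.segment_subset {e f : Pt × Pt} (h : Sees B c e f) :
    segment ℝ (c, height c e) (c, height c f) ⊆ B := by
  rw [← Prod.image_mk_segment_right, segment_eq_uIcc]
  exact Set.image_subset_iff.2 h

theorem IsEucShortestIn.not_sees (h : IsEucShortestIn B s t (a :: b :: r))
    (hab : Crosses c (a, b)) {f : Pt × Pt} (hf : f ∈ pathEdges (b :: r)) (hfc : Crosses c f) :
    ¬ Sees B c (a, b) f := by
  intro hsees
  obtain ⟨hP, hs, ht, hmin⟩ := h
  obtain ⟨habB, hbr⟩ := pathIn_cons_cons_iff.1 hP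
  set p : Pt := (c, height c (a, b))
  set q : Pt := (c, height c f)
  have hp : p ∈ segment ℝ a b := hab.mem_segment
  have hap : segment ℝ a p ⊆ B :=
    ((convex_segment a b).segment_subset (left_mem_segment ℝ a b) hp).trans habB
  obtain ⟨Q, hQ, hlast, hlen⟩ := exists_pathIn_of_mem_edge hbr hf hfc.mem_segment
  have hle := hmin (a :: p :: q :: Q)
    (pathIn_cons_cons_iff.2 ⟨hap, pathIn_cons_cons_iff.2 ⟨hsees.segment_subset, hQ⟩⟩) hs
    (by rwa [List.getLast?_cons_cons, List.getLast?_cons_cons, hlast, ← List.getLast?_cons_cons])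
  have hbc : c ≠ b.1 := fun h => by simp [crosses_iff_mul_neg, h] at hab
  have hshort : d2 p q < d2 p b + d2 b q :=
    calc d2 p q = |p.2 - q.2| := d2_vertical c _ _
      _ ≤ |p.2 - b.2| + |b.2 - q.2| := abs_sub_le _ _ _
      _ < d2 p b + d2 b q :=
        add_lt_add (abs_snd_sub_snd_lt_d2 hbc) (abs_snd_sub_snd_lt_d2 hbc.symm)
  rw [elen, elen, elen] at hle
  linarith [d2_add_d2_of_mem_segment hp]

/-- The edges of the polygonal path `L` that cross the vertical line of abscissa `c`. -/
noncomputable def crossings (c : ℝ) (L : List Pt) : List (Pt × Pt) :=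
  (pathEdges L).filter (Crosses c)

theorem mem_crossings {e : Pt × Pt} : e ∈ crossings c L ↔ e ∈ pathEdges L ∧ Crosses c e := by
  rw [crossings, List.mem_filter, decide_eq_true_iff]

theorem IsEucShortestIn.pairwise_not_sees (h : IsEucShortestIn B s t L) (c : ℝ) :
    (pathEdges L).Pairwise fun e f => Crosses c e → Crosses c f → ¬ Sees B c e f := by
  induction L generalizing s with
  | nil => exact .nil
  | cons a r ih =>
    cases r with
    | nil => exact .nil
    | cons b r =>
      exact List.pairwise_cons.2 ⟨fun f hf he hfc => h.not_sees he hf hfc, ih h.tail⟩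

theorem length_le_of_pairwise_not {α β : Type*} {l : List α} {m : List β} {S : α → α → Prop}
    {R : α → β → Prop} (hl : l.Pairwise fun x y => ¬ S x y) (hR : ∀ x ∈ l, ∃ z ∈ m, R x z)
    (hS : ∀ x y z, R x z → R y z → S x y) : l.length ≤ m.length := by
  choose f hfm hfR using hR
  have hnodup : (l.pmap f fun _ => id).Nodup := by
    refine (hl.pmap fun _ => id) fun x hx y hy hxy hf => hxy ?_
    exact hS x y (f x hx) (hfR x hx) (hf ▸ hfR y hy)
  have hsub : l.pmap f (fun _ => id) ⊆ m := fun z hz => by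
    obtain ⟨x, hx, rfl⟩ := List.mem_pmap.1 hz
    exact hfm x hx
  simpa only [List.length_pmap] using (hnodup.subperm hsub).length_le

theorem IsEucShortestIn.length_crossings_le (hL : IsEucShortestIn B s t L)
    (hB : Bornology.IsBounded B) (hc : IsPreconnected Bᶜ) {M : List Pt} (hM : JoinsIn B s t M)
    (hLc : ∀ p ∈ L, p.1 ≠ c) (hMc : ∀ p ∈ M, p.1 ≠ c) :
    (crossings c L).length ≤ (crossings c M).length := by
  refine length_le_of_pairwise_not (S := Sees B c) (R := Sees B c) ?_ (fun e he => ?_)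
    fun e e' f h h' => h.trans h'.symm
  · refine List.pairwise_filter.2 ((hL.pairwise_not_sees c).imp fun h he hf => ?_)
    exact h (of_decide_eq_true he) (of_decide_eq_true hf)
  · obtain ⟨heL, hec⟩ := mem_crossings.1 he
    obtain ⟨E₁, E₂, hE⟩ := List.append_of_mem heL
    have hpair := hL.pairwise_not_sees c
    rw [hE, List.pairwise_middle fun {_ _} h he hf hs => h hf he hs.symm] at hpair
    obtain ⟨f, hf, hfc, hsees⟩ := exists_sees_of_forall_not_sees hB hc hL.joinsIn hM hLc hMc hE
      hec fun f hf => (List.pairwise_cons.1 hpair).1 f hf hec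
    exact ⟨f, mem_crossings.2 ⟨hf, hfc⟩, hsees⟩

end EuclideanShortest

section HorizontalVariation

open MeasureTheory

variable {B : Set Pt} {s t : Pt} {L M P : List Pt}

/-- The total variation of the abscissa along the polygonal path `P`, that is the contribution of
the first coordinate to `len P`. -/
noncomputable def horizontalVariation (P : List Pt) : ℝ :=
  ((pathEdges P).map fun e => |e.1.1 - e.2.1|).sum

theorem length_filter_crosses_cons (c : ℝ) (e : Pt × Pt) (E : List (Pt × Pt)) :
    (((e :: E).filter (Crosses c)).length : ℝ) =
      (Set.uIoo e.1.1 e.2.1).indicator 1 c + (E.filter (Crosses c)).length := by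
  by_cases he : Crosses c e
  · rw [List.filter_cons_of_pos (by simpa using he), Set.indicator_of_mem he, List.length_cons,
      Nat.cast_succ, add_comm, Pi.one_apply]
  · rw [List.filter_cons_of_neg (by simpa using he), Set.indicator_of_notMem he, zero_add]

theorem integrable_indicator_uIoo (a b : ℝ) :
    Integrable ((Set.uIoo a b).indicator (1 : ℝ → ℝ)) :=
  (integrable_indicator_iff measurableSet_Ioo).2 (integrableOn_const (by simp))

theorem integrable_length_filter_crosses (E : List (Pt × Pt)) :
    Integrable fun c => ((E.filter (Crosses c)).length : ℝ) := by
  induction E with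
  | nil => simp
  | cons e E ih =>
    simp only [length_filter_crosses_cons]
    exact (integrable_indicator_uIoo _ _).add ih

theorem integral_length_filter_crosses (E : List (Pt × Pt)) :
    ∫ c, ((E.filter (Crosses c)).length : ℝ) = (E.map fun e => |e.1.1 - e.2.1|).sum := by
  induction E with
  | nil => simp
  | cons e E ih =>
    simp only [length_filter_crosses_cons]
    rw [integral_add (integrable_indicator_uIoo _ _) (integrable_length_filter_crosses E), ih,
      integral_indicator_one (s := Set.uIoo _ _) measurableSet_Ioo, List.map_cons, List.sum_cons,
      measureReal_def, Real.volume_uIoo, ENNReal.toReal_ofReal (abs_nonneg _), abs_sub_comm]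

theorem ae_forall_mem_fst_ne (P : List Pt) : ∀ᵐ c : ℝ, ∀ p ∈ P, p.1 ≠ c := by
  filter_upwards [(P.map Prod.fst).finite_toSet.countable.ae_notMem volume] with c hc p hp hpc
  exact hc (List.mem_map.2 ⟨p, hp, hpc⟩)

theorem IsEucShortestIn.horizontalVariation_le (hL : IsEucShortestIn B s t L)
    (hB : Bornology.IsBounded B) (hc : IsPreconnected Bᶜ) (hM : JoinsIn B s t M) :
    horizontalVariation L ≤ horizontalVariation M := by
  rw [horizontalVariation, horizontalVariation, ← integral_length_filter_crosses,
    ← integral_length_filter_crosses]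
  refine integral_mono_ae (integrable_length_filter_crosses _)
    (integrable_length_filter_crosses _) ?_
  filter_upwards [ae_forall_mem_fst_ne L, ae_forall_mem_fst_ne M] with c hLc hMc
  exact Nat.cast_le.2 (hL.length_crossings_le hB hc hM hLc hMc)

end HorizontalVariation

section Swap

variable {B : Set Pt} {s t : Pt} {L P : List Pt}

theorem len_eq_sum (P : List Pt) : len P = ((pathEdges P).map fun e => d1 e.1 e.2).sum := by
  induction P using len.induct with
  | case1 => rfl
  | case2 => rfl
  | case3 p q r ih => rw [len, ih, pathEdges_cons_cons, List.map_cons, List.sum_cons]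

theorem elen_eq_sum (P : List Pt) : elen P = ((pathEdges P).map fun e => d2 e.1 e.2).sum := by
  induction P using elen.induct with
  | case1 => rfl
  | case2 => rfl
  | case3 p q r ih => rw [elen, ih, pathEdges_cons_cons, List.map_cons, List.sum_cons]

theorem len_eq_horizontalVariation_add (P : List Pt) :
    len P = horizontalVariation P + horizontalVariation (P.map Prod.swap) := by
  rw [horizontalVariation, horizontalVariation, pathEdges_map, List.map_map, ← List.sum_map_add,
    len_eq_sum]
  rfl

theorem elen_map_swap (P : List Pt) : elen (P.map Prod.swap) = elen P := by
  rw [elen_eq_sum, elen_eq_sum, pathEdges_map, List.map_map]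
  exact congrArg List.sum (List.map_congr_left fun e _ => congrArg Real.sqrt (add_comm _ _))

theorem segment_swap (a b : Pt) : segment ℝ a.swap b.swap = Prod.swap ⁻¹' segment ℝ a b := by
  rw [← Set.image_swap_eq_preimage_swap]
  exact (image_segment ℝ (LinearEquiv.prodComm ℝ ℝ ℝ).toLinearMap.toAffineMap a b).symm

theorem PathIn.map_swap (h : PathIn B P) : PathIn (Prod.swap ⁻¹' B) (P.map Prod.swap) := by
  refine ⟨List.forall_mem_map.2 h.1, (List.isChain_map Prod.swap).2 (h.2.imp fun a b hab => ?_)⟩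
  rw [segment_swap]
  exact Set.preimage_mono hab

theorem JoinsIn.map_swap (h : JoinsIn B s t P) :
    JoinsIn (Prod.swap ⁻¹' B) s.swap t.swap (P.map Prod.swap) where
  pathIn := h.pathIn.map_swap
  head?_eq := by rw [List.head?_map, h.head?_eq, Option.map_some]
  getLast?_eq := by rw [List.getLast?_map, h.getLast?_eq, Option.map_some]

theorem IsEucShortestIn.map_swap (h : IsEucShortestIn B s t L) :
    IsEucShortestIn (Prod.swap ⁻¹' B) s.swap t.swap (L.map Prod.swap) := by
  have hL := h.joinsIn.map_swap
  refine ⟨hL.pathIn, hL.head?_eq, hL.getLast?_eq, fun M hM hMs hMt => ?_⟩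
  have hM' : JoinsIn B s t (M.map Prod.swap) := (JoinsIn.mk hM hMs hMt).map_swap
  have hle := h.2.2.2 _ hM'.pathIn hM'.head?_eq hM'.getLast?_eq
  rwa [elen_map_swap] at hle ⊢

end Swap

theorem euclidean_shortest_is_L1_shortest_general {B : Set Pt} (hB : Bornology.IsBounded B)
    (hc : IsPreconnected Bᶜ) {s t : Pt} {L : List Pt} (hL : IsEucShortestIn B s t L) :
    IsL1ShortestIn B s t L := by
  refine ⟨hL.1, hL.2.1, hL.2.2.1, fun M hM hMs hMt => ?_⟩
  have hB' : Bornology.IsBounded (Prod.swap ⁻¹' B) := by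
    rw [← Set.image_swap_eq_preimage_swap]
    exact (ContinuousLinearEquiv.prodComm ℝ ℝ ℝ).lipschitz.isBounded_image hB
  have hc' : IsPreconnected (Prod.swap ⁻¹' B)ᶜ :=
    (Homeomorph.prodComm ℝ ℝ).isPreconnected_preimage.2 hc
  rw [len_eq_horizontalVariation_add, len_eq_horizontalVariation_add]
  have hM' : JoinsIn B s t M := ⟨hM, hMs, hMt⟩
  exact add_le_add (hL.horizontalVariation_le hB hc hM')
    (hL.map_swap.horizontalVariation_le hB' hc' hM'.map_swap)

/-- in a simple polygon, every Euclidean shortest path between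
two points is also an L1 shortest path between them (among paths constrained
to the polygon). -/
theorem euclidean_shortest_is_L1_shortest (B : Set Pt) (hB : IsSimplePolygon B)
    (s t : Pt) (hs : s ∈ B) (ht : t ∈ B) (L : List Pt)
    (hL : IsEucShortestIn B s t L) : IsL1ShortestIn B s t L :=
  euclidean_shortest_is_L1_shortest_general hB.isBounded hB.isPreconnected_compl hL
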